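/- Let a consecutive transition instance with n moving labels be given whose movement graph G_M has a feedback arc set of size m. Then there exists an order in which to execute the n movements consecutively such that at most n + m overlaps occur during the transition. -/

import Mathlib

open Set

/-- The closed axis-aligned unit square with lower-left corner `a`. -/
def unitSq (a : ℝ × ℝ) : Set (ℝ × ℝ) :=
  Set.Icc a.1 (a.1 + 1) ×ˢ Set.Icc a.2 (a.2 + 1)

/-- Two unit squares, given by their lower-left corners, overlap if their interiors intersect. -/
def Overlap (a b : ℝ × ℝ) : Prop :=
  (interior (unitSq a) ∩ interior (unitSq b)).Nonempty

/-- `a` is the lower-left corner of one of the four candidate positions of point `p`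
(the four closed unit squares having `p` as a corner). -/
def IsCandidate (p a : ℝ × ℝ) : Prop :=
  a = p ∨ a = (p.1 - 1, p.2) ∨ a = (p.1, p.2 - 1) ∨ a = (p.1 - 1, p.2 - 1)

/-- Two unit squares (given by lower-left corners) share an edge. -/
def SharesEdge (a b : ℝ × ℝ) : Prop :=
  (a.1 = b.1 ∧ (a.2 - b.2 = 1 ∨ b.2 - a.2 = 1)) ∨
  (a.2 = b.2 ∧ (a.1 - b.1 = 1 ∨ b.1 - a.1 = 1))

/-- A movement of the unit-square label of point `p` from candidate position `S` to candidate
position `E`.  If `S` and `E` share an edge (a non-diagonal movement) we set `I = E` and the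
label translates directly from `S` to `E`; if `S` and `E` are diagonally opposite (a diagonal
movement) the label translates through the specified intermediate candidate position `I`,
which shares an edge with both `S` and `E`. -/
structure Movement where
  p : ℝ × ℝ
  S : ℝ × ℝ
  I : ℝ × ℝ
  E : ℝ × ℝ
  candS : IsCandidate p S
  candI : IsCandidate p I
  candE : IsCandidate p E
  legs : (I = E ∧ SharesEdge S E) ∨
    (SharesEdge S I ∧ SharesEdge I E ∧ S.1 ≠ E.1 ∧ S.2 ≠ E.2)

/-- A movement is diagonal if the start and end positions are diagonally opposite
(equivalently, the intermediate position differs from the end position). -/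
def Movement.Diagonal (m : Movement) : Prop := m.I ≠ m.E

/-- Position (lower-left corner) of a moving label at time `t` after the start of its movement:
unit-speed axis-aligned translation, one unit of time per axis-aligned leg; the label rests at
its start position before the movement begins and at its end position after it is finished. -/
noncomputable def Movement.pos (m : Movement) (t : ℝ) : ℝ × ℝ :=
  if t ≤ 0 then m.S
  else if t ≤ 1 then m.S + t • (m.I - m.S)
  else if t ≤ 2 then m.I + (t - 1) • (m.E - m.I)
  else m.E

/-- Duration of a movement: one unit of time per axis-aligned translation. -/
noncomputable def Movement.dur (m : Movement) : ℝ := if m.I = m.E then 1 else 2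

/-- A transition instance: finitely many stationary labels (given by their lower-left corners)
and `n` moving labels, each with a prescribed movement, such that the labeling `L₁` formed by
the stationary labels together with the start positions of the moving labels is overlap-free,
and the labeling `L₂` formed by the stationary labels together with the end positions of the
moving labels is overlap-free. -/
structure TransitionInstance (k n : ℕ) where
  stat : Fin k → ℝ × ℝ
  mov : Fin n → Movement
  free_start : ∀ a b : Fin k ⊕ Fin n, a ≠ b →
    ¬ Overlap (Sum.elim stat (fun j => (mov j).S) a)
      (Sum.elim stat (fun j => (mov j).S) b)
  free_end : ∀ a b : Fin k ⊕ Fin n, a ≠ b →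
    ¬ Overlap (Sum.elim stat (fun j => (mov j).E) a)
      (Sum.elim stat (fun j => (mov j).E) b)

/-- A schedule `τ` of starting times is consecutive if the execution intervals of the movements
are pairwise non-overlapping, i.e. the movements are executed one after another in some order. -/
def Consecutive {k n : ℕ} (T : TransitionInstance k n) (τ : Fin n → ℝ) : Prop :=
  ∀ i j : Fin n, i ≠ j →
    τ i + (T.mov i).dur ≤ τ j ∨ τ j + (T.mov j).dur ≤ τ i

/-- Position (lower-left corner) of each label at global time `t`, when moving label `j`
starts its movement at time `τ j`; stationary labels never move. -/
noncomputable def traj {k n : ℕ} (T : TransitionInstance k n) (τ : Fin n → ℝ) (t : ℝ) :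
    Fin k ⊕ Fin n → ℝ × ℝ :=
  Sum.elim T.stat (fun j => (T.mov j).pos (t - τ j))

/-- The number of overlaps during the transition: the number of unordered pairs of distinct
labels whose interiors intersect at some moment. -/
noncomputable def overlapCount {k n : ℕ} (T : TransitionInstance k n) (τ : Fin n → ℝ) : ℕ :=
  Set.ncard {q : Sym2 (Fin k ⊕ Fin n) | ∃ a b : Fin k ⊕ Fin n,
    q = s(a, b) ∧ a ≠ b ∧ ∃ t : ℝ, Overlap (traj T τ t a) (traj T τ t b)}

/-- The movement graph `G_M`: there is an edge from `vᵢ` to `vⱼ` whenever the intermediate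
(if any) or end position of `Mⱼ` overlaps the start position of `Mᵢ`, or the end position of
`Mⱼ` overlaps the intermediate position (if any) of `Mᵢ`; in addition, if the intermediate
positions of `Mᵢ` and `Mⱼ` overlap and `i < j`, there is an edge from `vᵢ` to `vⱼ`. -/
def Edge {k n : ℕ} (T : TransitionInstance k n) (i j : Fin n) : Prop :=
  ((T.mov j).Diagonal ∧ Overlap (T.mov j).I (T.mov i).S) ∨
  Overlap (T.mov j).E (T.mov i).S ∨
  ((T.mov i).Diagonal ∧ Overlap (T.mov j).E (T.mov i).I) ∨
  ((T.mov i).Diagonal ∧ (T.mov j).Diagonal ∧ Overlap (T.mov i).I (T.mov j).I ∧ i < j)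

theorem overlap_iff (a b : ℝ × ℝ) :
    Overlap a b ↔ |a.1 - b.1| < 1 ∧ |a.2 - b.2| < 1 := by
  unfold Overlap unitSq
  rw [interior_prod_eq, interior_prod_eq]
  simp only [interior_Icc]
  constructor
  · rintro ⟨⟨x, y⟩, ⟨⟨h1, h2⟩, ⟨h3, h4⟩⟩, ⟨⟨h5, h6⟩, ⟨h7, h8⟩⟩⟩
    simp only at *
    constructor <;> rw [abs_lt] <;> constructor <;> linarith
  · rintro ⟨h1, h2⟩
    rw [abs_lt] at h1 h2
    obtain ⟨h1, h1'⟩ := h1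
    obtain ⟨h2, h2'⟩ := h2
    refine ⟨((a.1 + b.1 + 1) / 2, (a.2 + b.2 + 1) / 2),
      ⟨⟨?_, ?_⟩, ⟨?_, ?_⟩⟩, ⟨⟨?_, ?_⟩, ⟨?_, ?_⟩⟩⟩ <;> simp only <;> linarith

theorem overlap_comm (a b : ℝ × ℝ) : Overlap a b ↔ Overlap b a := by
  rw [overlap_iff, overlap_iff, abs_sub_comm a.1, abs_sub_comm a.2]

theorem leg_overlap (a b P : ℝ × ℝ) (h : SharesEdge a b) (t : ℝ) (h0 : 0 ≤ t) (h1 : t ≤ 1)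
    (ho : Overlap (a + t • (b - a)) P) : Overlap a P ∨ Overlap b P := by
  simp only [overlap_iff, abs_lt, Prod.fst_add, Prod.snd_add, Prod.smul_fst, Prod.smul_snd,
    Prod.fst_sub, Prod.snd_sub, smul_eq_mul] at ho ⊢
  obtain ⟨⟨o1, o2⟩, o3, o4⟩ := ho
  rcases h with ⟨e, h | h⟩ | ⟨e, h | h⟩
  · have hb : b.2 = a.2 - 1 := by linarith
    rw [hb] at o3 o4 ⊢
    rw [← e] at o1 o2 ⊢
    ring_nf at o1 o2 o3 o4
    by_cases hc : a.2 - P.2 < 1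
    · left; refine ⟨⟨?_, ?_⟩, ?_, ?_⟩ <;> linarith
    · right; refine ⟨⟨?_, ?_⟩, ?_, ?_⟩ <;> linarith
  · have hb : b.2 = a.2 + 1 := by linarith
    rw [hb] at o3 o4 ⊢
    rw [← e] at o1 o2 ⊢
    ring_nf at o1 o2 o3 o4
    by_cases hc : -1 < a.2 - P.2
    · left; refine ⟨⟨?_, ?_⟩, ?_, ?_⟩ <;> linarith
    · right; refine ⟨⟨?_, ?_⟩, ?_, ?_⟩ <;> linarith
  · have hb : b.1 = a.1 - 1 := by linarith
    rw [hb] at o1 o2 ⊢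
    rw [← e] at o3 o4 ⊢
    ring_nf at o1 o2 o3 o4
    by_cases hc : a.1 - P.1 < 1
    · left; refine ⟨⟨?_, ?_⟩, ?_, ?_⟩ <;> linarith
    · right; refine ⟨⟨?_, ?_⟩, ?_, ?_⟩ <;> linarith
  · have hb : b.1 = a.1 + 1 := by linarith
    rw [hb] at o1 o2 ⊢
    rw [← e] at o3 o4 ⊢
    ring_nf at o1 o2 o3 o4
    by_cases hc : -1 < a.1 - P.1
    · left; refine ⟨⟨?_, ?_⟩, ?_, ?_⟩ <;> linarith
    · right; refine ⟨⟨?_, ?_⟩, ?_, ?_⟩ <;> linarith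

theorem pos_overlap (m : Movement) (P : ℝ × ℝ) (t : ℝ) (h : Overlap (m.pos t) P) :
    Overlap m.S P ∨ (m.Diagonal ∧ Overlap m.I P) ∨ Overlap m.E P := by
  have hIP : Overlap m.I P → (m.Diagonal ∧ Overlap m.I P) ∨ Overlap m.E P := by
    intro hI
    by_cases hd : m.I = m.E
    · right; rwa [← hd]
    · left; exact ⟨hd, hI⟩
  unfold Movement.pos at h
  split_ifs at h with h1 h2 h3
  · exact Or.inl h
  · have hSI : SharesEdge m.S m.I := by
      rcases m.legs with ⟨e, h⟩ | ⟨h, -⟩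
      · rwa [e]
      · exact h
    rcases leg_overlap _ _ _ hSI t (by linarith) h2 h with h | h
    · exact Or.inl h
    · exact Or.inr (hIP h)
  · rcases m.legs with ⟨e, -⟩ | ⟨-, hIE, -⟩
    · rw [e] at h
      simp only [sub_self, smul_zero, add_zero] at h
      exact Or.inr (Or.inr h)
    · rcases leg_overlap _ _ _ hIE (t - 1) (by linarith) (by linarith) h with h | h
      · exact Or.inr (hIP h)
      · exact Or.inr (Or.inr h)
  · exact Or.inr (Or.inr h)

theorem pos_start (m : Movement) (t : ℝ) (h : t ≤ 0) : m.pos t = m.S := by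
  simp [Movement.pos, h]

theorem pos_end (m : Movement) (t : ℝ) (h : 2 ≤ t) : m.pos t = m.E := by
  unfold Movement.pos
  rw [if_neg (by linarith), if_neg (by linarith)]
  split_ifs with h3
  · have : t = 2 := le_antisymm h3 h
    subst this
    norm_num
  · rfl

set_option maxHeartbeats 4000000 in
/-- Two squares which overlap the intermediate position of a diagonal movement, but neither its
start nor its end position, overlap each other. -/
theorem stat_unique (m : Movement) (hd : m.Diagonal) (P Q : ℝ × ℝ)
    (hP : Overlap m.I P) (hPS : ¬ Overlap m.S P) (hPE : ¬ Overlap m.E P)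
    (hQ : Overlap m.I Q) (hQS : ¬ Overlap m.S Q) (hQE : ¬ Overlap m.E Q) : Overlap P Q := by
  rcases m.legs with ⟨e, -⟩ | ⟨h1, h2, h3, h4⟩
  · exact absurd e hd
  have key : ∀ R, Overlap m.I R → ¬ Overlap m.S R → ¬ Overlap m.E R →
      (0 ≤ (m.I.1 - R.1) * (m.S.1 + m.E.1 - 2 * m.I.1) ∧
       0 ≤ (m.I.2 - R.2) * (m.S.2 + m.E.2 - 2 * m.I.2)) := by
    intro R hR hRS hRE
    simp only [overlap_iff, abs_lt, not_and_or, not_lt] at hR hRS hRE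
    obtain ⟨⟨o1, o2⟩, o3, o4⟩ := hR
    rcases h1 with ⟨e, h | h⟩ | ⟨e, h | h⟩ <;> rcases h2 with ⟨e', h' | h'⟩ | ⟨e', h' | h'⟩ <;>
    first
    | exact absurd (e.trans e') h3
    | exact absurd (e.trans e') h4
    | (rcases hRS with (hh | hh) | (hh | hh) <;> rcases hRE with (hg | hg) | (hg | hg) <;>
        first
        | (exfalso; linarith)
        | (constructor <;> nlinarith))
  have kP := key P hP hPS hPE
  have kQ := key Q hQ hQS hQE
  simp only [overlap_iff, abs_lt] at hP hQ ⊢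
  obtain ⟨⟨o1, o2⟩, o3, o4⟩ := hP
  obtain ⟨⟨q1, q2⟩, q3, q4⟩ := hQ
  obtain ⟨k1, k2⟩ := kP
  obtain ⟨k3, k4⟩ := kQ
  rcases h1 with ⟨e, h | h⟩ | ⟨e, h | h⟩ <;> rcases h2 with ⟨e', h' | h'⟩ | ⟨e', h' | h'⟩ <;>
  first
  | exact absurd (e.trans e') h3
  | exact absurd (e.trans e') h4
  | (refine ⟨⟨?_, ?_⟩, ?_, ?_⟩ <;> nlinarith)

theorem exists_rank {n : ℕ} (r : Fin n → Fin n → Prop)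
    (hac : ∀ i, ¬ Relation.TransGen r i i) :
    ∃ f : Fin n → ℕ, Function.Injective f ∧ ∀ i j, r i j → f i < f j := by
  classical
  have hpo : IsPartialOrder (Fin n) (Relation.ReflTransGen r) :=
    { refl := fun _ => Relation.ReflTransGen.refl
      trans := fun _ _ _ => Relation.ReflTransGen.trans
      antisymm := by
        intro a b hab hba
        by_contra hne
        rcases Relation.reflTransGen_iff_eq_or_transGen.1 hab with h | h
        · exact hne h.symm
        · exact hac a (h.trans_left hba) }
  obtain ⟨s, hs, hrs⟩ := extend_partialOrder (Relation.ReflTransGen r)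
  have hmono : ∀ i j, s i j → i ≠ j →
      (Finset.univ.filter (fun x => s x i ∧ x ≠ i)).card <
      (Finset.univ.filter (fun x => s x j ∧ x ≠ j)).card := by
    intro i j hij hne
    apply Finset.card_lt_card
    rw [Finset.ssubset_iff_of_subset]
    · exact ⟨i, by simp [hij, hne], by simp⟩
    · intro x hx
      simp only [Finset.mem_filter, Finset.mem_univ, true_and] at hx ⊢
      refine ⟨hs.trans _ _ _ hx.1 hij, ?_⟩
      rintro rfl
      exact hne (hs.antisymm _ _ hij hx.1)
  refine ⟨fun i => (Finset.univ.filter (fun x => s x i ∧ x ≠ i)).card, ?_, ?_⟩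
  · intro i j hij
    by_contra hne
    rcases hs.total i j with h | h
    · exact absurd hij (hmono i j h hne).ne
    · exact absurd hij (hmono j i h (Ne.symm hne)).ne'
  · intro i j hij
    apply hmono i j (hrs _ _ (Relation.ReflTransGen.single hij))
    rintro rfl
    exact hac i (Relation.TransGen.single hij)

/-- If `i` moves before `j` and they overlap at some time, there is an edge from `j` to `i`. -/
theorem edge_of_overlap {k n : ℕ} (T : TransitionInstance k n) (τ : Fin n → ℝ) (i j : Fin n)
    (hij : τ i + 2 ≤ τ j) (t : ℝ)
    (h : Overlap ((T.mov i).pos (t - τ i)) ((T.mov j).pos (t - τ j))) : Edge T j i := by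
  have hne : i ≠ j := by rintro rfl; linarith
  have hS : ¬ Overlap (T.mov i).S (T.mov j).S :=
    T.free_start (Sum.inr i) (Sum.inr j) (by simpa using hne)
  have hE : ¬ Overlap (T.mov j).E (T.mov i).E :=
    T.free_end (Sum.inr j) (Sum.inr i) (by simpa using hne.symm)
  rcases le_total t (τ j) with ht | ht
  · rw [pos_start (T.mov j) _ (by linarith)] at h
    rcases pos_overlap _ _ _ h with h | h | h
    · exact absurd h hS
    · exact Or.inl h
    · exact Or.inr (Or.inl h)
  · rw [pos_end (T.mov i) _ (by linarith), overlap_comm] at h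
    rcases pos_overlap _ _ _ h with h | h | h
    · exact Or.inr (Or.inl ((overlap_comm _ _).1 h))
    · exact Or.inr (Or.inr (Or.inl ⟨h.1, (overlap_comm _ _).1 h.2⟩))
    · exact absurd h hE

/-- If the movement graph of a consecutive transition instance with `n` moving labels has a
feedback arc set of size `m` (a set of edges whose removal leaves no directed cycle), then there
is an order in which to execute the `n` movements consecutively such that at most `n + m`
overlaps occur during the transition. -/
theorem consecutive_overlaps_le_of_feedback_arc_set {k n : ℕ} (T : TransitionInstance k n)
    (F : Finset (Fin n × Fin n)) (m : ℕ)
    (hF : ∀ e ∈ F, Edge T e.1 e.2)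
    (hcard : F.card = m)
    (hacyclic : ∀ i : Fin n,
      ¬ Relation.TransGen (fun a b : Fin n => Edge T a b ∧ (a, b) ∉ F) i i) :
    ∃ τ : Fin n → ℝ, Consecutive T τ ∧ overlapCount T τ ≤ n + m := by
  classical
  obtain ⟨f, hf, hr⟩ := exists_rank _ hacyclic
  have hcons : ∀ i j, f i < f j → (2 * f i : ℝ) + 2 ≤ 2 * f j := by
    intro i j h
    have : (f i : ℝ) + 1 ≤ f j := by exact_mod_cast h
    linarith
  have hdur : ∀ m : Movement, m.dur ≤ 2 := by
    intro m
    unfold Movement.dur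
    split_ifs <;> norm_num
  refine ⟨fun i => 2 * f i, ?_, ?_⟩
  · intro i j hij
    rcases lt_or_gt_of_ne (hf.ne hij) with h | h
    · left
      have := hcons i j h
      have := hdur (T.mov i)
      simp only
      linarith
    · right
      have := hcons j i h
      have := hdur (T.mov j)
      simp only
      linarith
  · let C : Set (Fin n × Fin k) :=
      {c | (T.mov c.1).Diagonal ∧ Overlap (T.mov c.1).I (T.stat c.2)}
    have hPS : ∀ i x, ¬ Overlap (T.mov i).S (T.stat x) := fun i x =>
      T.free_start (Sum.inr i) (Sum.inl x) (by simp)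
    have hPE : ∀ i x, ¬ Overlap (T.mov i).E (T.stat x) := fun i x =>
      T.free_end (Sum.inr i) (Sum.inl x) (by simp)
    have hC : C.ncard ≤ n := by
      have hinj : Set.InjOn Prod.fst C := by
        rintro ⟨i, x⟩ ⟨hd, hx⟩ ⟨j, y⟩ ⟨-, hy⟩ hij
        simp only at hij hd hx hy
        subst hij
        by_contra hne
        refine T.free_start (Sum.inl x) (Sum.inl y) ?_
          (stat_unique _ hd _ _ hx (hPS i x) (hPE i x) hy (hPS i y) (hPE i y))
        rintro h
        exact hne (by rw [Sum.inl.inj h])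
      rw [← hinj.ncard_image]
      refine (Set.ncard_le_ncard (Set.subset_univ _)).trans ?_
      simp [Set.ncard_univ]
    let g : Fin n × Fin k → Sym2 (Fin k ⊕ Fin n) := fun c => s(Sum.inr c.1, Sum.inl c.2)
    let e : Fin n × Fin n → Sym2 (Fin k ⊕ Fin n) := fun c => s(Sum.inr c.1, Sum.inr c.2)
    have hstat : ∀ i x t, Overlap ((T.mov i).pos t) (T.stat x) → (i, x) ∈ C := by
      intro i x t h
      rcases pos_overlap _ _ _ h with h | h | h
      · exact absurd h (hPS i x)
      · exact h
      · exact absurd h (hPE i x)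
    have hFmem : ∀ i j, f i < f j → Edge T j i → (j, i) ∈ F := by
      intro i j hlt hE
      by_contra hn
      exact absurd (hr j i ⟨hE, hn⟩) (by omega)
    have hsub : {q : Sym2 (Fin k ⊕ Fin n) | ∃ a b : Fin k ⊕ Fin n,
        q = s(a, b) ∧ a ≠ b ∧ ∃ t : ℝ, Overlap (traj T (fun i => 2 * (f i : ℝ)) t a)
          (traj T (fun i => 2 * (f i : ℝ)) t b)} ⊆ g '' C ∪ e '' (F : Set (Fin n × Fin n)) := by
      rintro q ⟨a, b, rfl, hab, t, h⟩
      rcases a with x | i <;> rcases b with y | j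
      · exact absurd h (T.free_start (Sum.inl x) (Sum.inl y) hab)
      · left
        exact ⟨(j, x), hstat j x _ ((overlap_comm _ _).1 h), Sym2.eq_swap⟩
      · left
        exact ⟨(i, y), hstat i y _ h, rfl⟩
      · right
        have hij : i ≠ j := fun h => hab (by rw [h])
        rcases lt_or_gt_of_ne (hf.ne hij) with hlt | hlt
        · exact ⟨(j, i), hFmem i j hlt
            (edge_of_overlap T (fun i => 2 * (f i : ℝ)) i j (hcons i j hlt) t h), Sym2.eq_swap⟩
        · exact ⟨(i, j), hFmem j i hlt
            (edge_of_overlap T (fun i => 2 * (f i : ℝ)) j i (hcons j i hlt) t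
              ((overlap_comm _ _).1 h)), rfl⟩
    unfold overlapCount
    refine (Set.ncard_le_ncard hsub (Set.toFinite _)).trans ?_
    refine (Set.ncard_union_le _ _).trans ?_
    refine add_le_add ((Set.ncard_image_le (Set.toFinite _)).trans hC) ?_
    refine (Set.ncard_image_le (Set.toFinite _)).trans ?_
    rw [Set.ncard_coe_finset, hcard]
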